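/- (Growth of the singular series.) Assume n ≥ 4, gcd(L, 2·det(2M_F)) = 1, F(λ) ≡ 0 mod L and gcd(λ₀,…,λ_n, L) = 1. Then every limit σ_p(W;L,λ) exists, the product 𝔖(W;L,λ) converges, and there are constants c₂ ≥ c₁ > 0 depending only on F (in particular independent of L and λ) such that c₁·L^{−n} ≤ 𝔖(W;L,λ) ≤ c₂·L^{−n}. -/

import Mathlib

open scoped BigOperators
open Finset Filter Topology Matrix

noncomputable section

namespace Quad

/-- The integral quadratic form `x ↦ xᵀ M_F x` where `N = 2·M_F` is an integer
symmetric matrix with even diagonal, so that the value `(xᵀ N x)/2` is an integer. -/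
def Fint {m : ℕ} (N : Matrix (Fin m) (Fin m) ℤ) (x : Fin m → ℤ) : ℤ :=
  (∑ i, ∑ j, N i j * x i * x j) / 2

/-- The corresponding real quadratic form `x ↦ xᵀ M_F x`, `N = 2·M_F`. -/
def FR {m : ℕ} (N : Matrix (Fin m) (Fin m) ℤ) (x : Fin m → ℝ) : ℝ :=
  (∑ i, ∑ j, (N i j : ℝ) * x i * x j) / 2

/-- The real quadratic form attached to a real matrix. -/
def QFR {m : ℕ} (A : Matrix (Fin m) (Fin m) ℝ) (x : Fin m → ℝ) : ℝ :=
  ∑ i, ∑ j, A i j * x i * x j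

/-- The gradient `∇F(x) = 2 M_F x = N x`. -/
def grad {m : ℕ} (N : Matrix (Fin m) (Fin m) ℤ) (x : Fin m → ℤ) : Fin m → ℤ :=
  fun i => ∑ j, N i j * x j

/-- `H_{λ,L}(y) = F(λ)/L + ∇F(λ)·y` (assuming `L ∣ F(λ)`). -/
def Hpoly {m : ℕ} (N : Matrix (Fin m) (Fin m) ℤ) (L : ℕ) (lam y : Fin m → ℤ) : ℤ :=
  Fint N lam / (L : ℤ) + ∑ i, grad N lam i * y i

/-- The additive character `e_q(t) = exp(2πit/q)`. -/
def eChar (q : ℕ) (t : ℝ) : ℂ := Complex.exp (2 * Real.pi * Complex.I * (t : ℂ) / (q : ℂ))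

/-- The dual form value `N_F(c) = cᵀ · adj(N) · c`, `N = 2 M_F`; this equals `2ⁿ F*(c)`. -/
def dualF {m : ℕ} (N : Matrix (Fin m) (Fin m) ℤ) (c : Fin m → ℤ) : ℤ :=
  ∑ i, ∑ j, N.adjugate i j * c i * c j

/-- The embedding sending the `i`-th of the `n-1` variables of `F₂` to coordinate `i+2`. -/
def emb {n : ℕ} (i : Fin (n-1)) : Fin (n+1) := ⟨i.val + 2, by have h := i.isLt; omega⟩

/-- The quadratic Gauss sum `ι_q = Σ_{x mod q} e_q(x²)`. -/
def iotaSum (q : ℕ) : ℂ := ∑ x ∈ Finset.range q, eChar q ((x : ℝ)^2)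

open Classical in
/-- The exponential sum `S_{q,L,λ}(c)`. -/
def Sq (n : ℕ) (N : Matrix (Fin (n+1)) (Fin (n+1)) ℤ) (q L : ℕ)
    (lam c : Fin (n+1) → ℤ) : ℂ :=
  ∑ a ∈ (Finset.range q).filter (fun a => Nat.gcd a q = 1),
    ∑ σ ∈ (Finset.univ : Finset (Fin (n+1) → Fin (q*L))).filter
        (fun σ => (L : ℤ) ∣ Hpoly N L lam (fun i => ((σ i : ℕ) : ℤ))),
      eChar (q*L)
        (((a : ℤ) * (Hpoly N L lam (fun i => ((σ i : ℕ) : ℤ))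
            + (L : ℤ) * Fint N (fun i => ((σ i : ℕ) : ℤ)))
          + ∑ i, c i * ((σ i : ℕ) : ℤ) : ℤ) : ℝ)

/-- The good-modulus factor `S⁽¹⁾_{q,L,λ}(c)` (for `q = q₁q₂`, `gcd(q₁,2LD) = 1`). -/
def S1 (n : ℕ) (N : Matrix (Fin (n+1)) (Fin (n+1)) ℤ) (q₁ q₂ L : ℕ) (k₁ : ℤ)
    (lam c : Fin (n+1) → ℤ) : ℂ :=
  ∑ σ : Fin (n+1) → Fin q₁,
    ∑ a ∈ (Finset.range q₁).filter (fun a => Nat.gcd a q₁ = 1),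
      eChar q₁
        (((a : ℤ) * (((q₂ : ℤ) * (L : ℤ))^2 * Fint N (fun i => ((σ i : ℕ) : ℤ))
              + (q₂ : ℤ) * ((∑ i, grad N lam i * ((σ i : ℕ) : ℤ)) + k₁))
          + ∑ i, c i * ((σ i : ℕ) : ℤ) : ℤ) : ℝ)

open Classical in
/-- The bad-modulus factor `S⁽²⁾_{q,L,λ}(c)`. -/
def S2 (n : ℕ) (N : Matrix (Fin (n+1)) (Fin (n+1)) ℤ) (q₁ q₂ L : ℕ) (k₂ : ℤ)
    (lam c : Fin (n+1) → ℤ) : ℂ :=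
  ∑ σ ∈ (Finset.univ : Finset (Fin (n+1) → Fin (q₂*L))).filter
      (fun σ => (L : ℤ) ∣ Hpoly N L lam (fun i => (q₁ : ℤ) * ((σ i : ℕ) : ℤ))),
    ∑ a ∈ (Finset.range q₂).filter (fun a => Nat.gcd a q₂ = 1),
      eChar (q₂*L)
        (((a : ℤ) * ((q₁ : ℤ)^2 * (L : ℤ) * Fint N (fun i => ((σ i : ℕ) : ℤ))
              + (q₁ : ℤ) * ((∑ i, grad N lam i * ((σ i : ℕ) : ℤ)) + k₂))
          + ∑ i, c i * ((σ i : ℕ) : ℤ) : ℤ) : ℝ)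

/-- The complete quadratic exponential sum `T_q(G,m;c)`. -/
def Tq (n : ℕ) (NG : Matrix (Fin (n+1)) (Fin (n+1)) ℤ) (q : ℕ) (m : ℤ)
    (c : Fin (n+1) → ℤ) : ℂ :=
  ∑ a ∈ (Finset.range q).filter (fun a => Nat.gcd a q = 1),
    ∑ b : Fin (n+1) → Fin q,
      eChar q (((a : ℤ) * (Fint NG (fun i => ((b i : ℕ) : ℤ)) - m)
        + ∑ i, c i * ((b i : ℕ) : ℤ) : ℤ) : ℝ)

/-- The counting function whose normalised limit is the local density
`σ_p(W;L,λ)`: the number of `v ∈ (ℤ/p^kℤ)^{n+1}` with `F(v) ≡ 0 mod p^k` and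
`v ≡ λ mod p^{ord_p L}`. -/
def localCount (n : ℕ) (N : Matrix (Fin (n+1)) (Fin (n+1)) ℤ) (L : ℕ)
    (lam : Fin (n+1) → ℤ) (p k : ℕ) : ℕ :=
  Nat.card {v : Fin (n+1) → Fin (p^k) //
    ((p : ℤ)^k ∣ Fint N (fun i => ((v i : ℕ) : ℤ))) ∧
    ∀ i, (p : ℤ)^(padicValNat p L) ∣ ((v i : ℕ) : ℤ) - lam i}

/-- The coordinates `t(x) = Mx` of an integer vector. -/
def tmap (n : ℕ) (M : Matrix (Fin (n+1)) (Fin (n+1)) ℝ) (x : Fin (n+1) → ℤ) :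
    Fin (n+1) → ℝ :=
  M.mulVec (fun i => (x i : ℝ))

/-- The counting function `N_W((R,ξ),(L,Γ);B)` for the affine cone. -/
def NW (n : ℕ) (N : Matrix (Fin (n+1)) (Fin (n+1)) ℤ)
    (M : Matrix (Fin (n+1)) (Fin (n+1)) ℝ) (a b : Fin (n+1) → ℝ)
    (B R : ℝ) (L : ℕ) (Γ : Fin (n+1) → ℤ) : ℕ :=
  Nat.card {x : Fin (n+1) → ℤ //
    x ≠ 0 ∧ Fint N x = 0 ∧ (∀ i, (L : ℤ) ∣ x i - Γ i) ∧
    tmap n M x 0 ≠ 0 ∧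
    (∀ j : Fin (n+1), 2 ≤ j.val →
      a j ≤ R * (tmap n M x j / tmap n M x 0) ∧ R * (tmap n M x j / tmap n M x 0) ≤ b j) ∧
    (∀ i, |tmap n M x i| ≤ B)}

/-- Twice the counting function `N_V((R,ξ),(L,Λ);B)` for the projective quadric:
the number of primitive integer vectors on the cone, in the real zoom region,
of height at most `B`, congruent mod `L` to a unit multiple of `Γ`. -/
def NV (n : ℕ) (N : Matrix (Fin (n+1)) (Fin (n+1)) ℤ)
    (M : Matrix (Fin (n+1)) (Fin (n+1)) ℝ) (a b : Fin (n+1) → ℝ)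
    (B R : ℝ) (L : ℕ) (Γ : Fin (n+1) → ℤ) : ℕ :=
  Nat.card {x : Fin (n+1) → ℤ //
    Finset.univ.gcd x = 1 ∧ Fint N x = 0 ∧
    tmap n M x 0 ≠ 0 ∧
    (∀ j : Fin (n+1), 2 ≤ j.val →
      a j ≤ R * (tmap n M x j / tmap n M x 0) ∧ R * (tmap n M x j / tmap n M x 0) ≤ b j) ∧
    (∀ i, |tmap n M x i| ≤ B) ∧
    (∃ γ : (ZMod L)ˣ, ∀ i, ((x i : ZMod L)) = (γ : ZMod L) * ((Γ i : ZMod L)))}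

/-- The value of the singular integral `I_R` for `R ≥ R₀`. -/
def IRval (n : ℕ) (M : Matrix (Fin (n+1)) (Fin (n+1)) ℝ) (a b : Fin (n+1) → ℝ)
    (R : ℝ) : ℝ :=
  2 * (∏ j ∈ Finset.univ.filter (fun j : Fin (n+1) => 2 ≤ j.val), (b j - a j))
    / (((n : ℝ) - 1) * |M.det| * R^(n-1))

/-- The error exponent factor `E_τ(B)`. -/
def Etau (n : ℕ) (τ B : ℝ) : ℝ :=
  if 5 ≤ n then B ^ (-(((n : ℝ) - 3) * τ / (5 * (n : ℝ) - 7)))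
  else B ^ (-(2 * τ / 17))

/-- The error factor `E_τ(1;B)` from the upper-bound range `-1 < τ < 1`. -/
def Etau1 (n : ℕ) (τ B : ℝ) : ℝ :=
  if 5 ≤ n then B ^ (-(((n : ℝ) - 3) * τ / 2))
  else B ^ (-τ) + B ^ (-((1 + τ)/4))

end Quad

namespace Quad

/-!
Let `δ_k` be `p ^ k` times the proportion of points modulo `p ^ k` which are zeros of `F` and lie in
a given union of residue classes. Lifting nonsingular zeros by Hensel's lemma leaves `δ_k`
unchanged, so the density of a class of nonsingular zeros is read off at the first level; hence a
prime `p` dividing `L` contributes exactly `p ^ (-n ord_p L)`.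

For the other primes write `m = n + 1`. A primitive zero has bounded singularity, so the primitive
zeros have an eventually constant density `π`, while the imprimitive ones are `p` times zeros modulo
`p ^ k`. Hence `δ_{k+2} = π + p ^ (2 - m) δ_k`, and `δ_k` converges to `π / (1 - p ^ (2 - m))`. This
limit is positive because a form in at least five variables has primitive zeros modulo every power
of `p`. When `p ∤ det (2 M_F)`, the second moment of the sizes of the fibres of `F` modulo `p` shows
that the limit differs from `1` by `O(p ^ (-3/2))`. The product of these factors over any set of
primes therefore converges, to a value bounded above and below in terms of `F` alone.
-/

section Isotropy

variable {M : Type*} [AddCommGroup M]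

theorem exists_mvPolynomial_eval_eq {R : Type*} [CommRing R] [Module R M] (Q : QuadraticForm R M)
    {ι : Type*} [Fintype ι] (e : ι → M) :
    ∃ f : MvPolynomial ι R, f.totalDegree ≤ 2 ∧
      ∀ x, MvPolynomial.eval x f = Q (∑ i, x i • e i) := by
  classical
  refine ⟨∑ i, MvPolynomial.C (Q (e i)) * (MvPolynomial.X i * MvPolynomial.X i) +
    ∑ ij ∈ Finset.univ.sym2 with ¬ ij.IsDiag,
      MvPolynomial.C (QuadraticMap.polarSym2 Q (ij.map e)) * (ij.map MvPolynomial.X).mul,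
    ?_, fun x ↦ ?_⟩
  · have hX (i j : ι) : (MvPolynomial.X (R := R) i * MvPolynomial.X j).totalDegree ≤ 2 := by
      nontriviality R using Subsingleton.elim _ (0 : MvPolynomial ι R)
      exact (MvPolynomial.totalDegree_mul _ _).trans (by simp [MvPolynomial.totalDegree_X])
    refine (MvPolynomial.totalDegree_add _ _).trans (max_le ?_ ?_) <;>
      refine MvPolynomial.totalDegree_finsetSum_le fun ij _ ↦
        (MvPolynomial.totalDegree_mul _ _).trans ?_ <;>
      rw [MvPolynomial.totalDegree_C, zero_add]
    · exact hX ij ij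
    · induction ij with | _ i j => exact hX i j
  · have hmul (ij : Sym2 ι) :
        MvPolynomial.eval x (ij.map MvPolynomial.X).mul = (ij.map x).mul := by
      induction ij with | _ i j => simp
    have hpolar (ij : Sym2 ι) : QuadraticMap.polarSym2 Q (ij.map fun i ↦ x i • e i) =
        (ij.map x).mul * QuadraticMap.polarSym2 Q (ij.map e) :=
      QuadraticMap.polarSym2_map_smul Q e x ij
    simp only [map_add, map_sum, map_mul, MvPolynomial.eval_C, MvPolynomial.eval_X, hmul,
      QuadraticMap.map_sum, QuadraticMap.map_smul, hpolar, smul_eq_mul]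
    congr 1 <;> exact Finset.sum_congr rfl fun _ _ ↦ mul_comm _ _

theorem exists_dvd_sum_smul_of_two_lt_card (Q : QuadraticForm ℤ M) {p : ℕ} (hp : p.Prime)
    {ι : Type*} [Fintype ι] (e : ι → M) (hcard : 2 < Fintype.card ι) :
    ∃ x : ι → ℤ, (∃ i, ¬ (p : ℤ) ∣ x i) ∧ (p : ℤ) ∣ Q (∑ i, x i • e i) := by
  classical
  have : Fact p.Prime := ⟨hp⟩
  obtain ⟨f, hdeg, hf⟩ := exists_mvPolynomial_eval_eq Q e
  set g := MvPolynomial.map (Int.castRingHom (ZMod p)) f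
  have hg (x : ι → ℤ) :
      MvPolynomial.eval (fun i ↦ (x i : ZMod p)) g = (Q (∑ i, x i • e i) : ZMod p) := by
    rw [← hf]
    exact MvPolynomial.map_eval (Int.castRingHom (ZMod p)) x f |>.symm
  have hgdeg : g.totalDegree ≤ 2 :=
    (Finset.sup_mono (MvPolynomial.support_map_subset _ _)).trans hdeg
  have hdvd : p ∣ Fintype.card {x : ι → ZMod p // MvPolynomial.eval x g = 0} :=
    char_dvd_card_solutions p (hgdeg.trans_lt hcard)
  have hzero : MvPolynomial.eval (0 : ι → ZMod p) g = 0 := by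
    simpa [Pi.zero_def] using hg 0
  have hone : 1 < Fintype.card {x : ι → ZMod p // MvPolynomial.eval x g = 0} :=
    hp.one_lt.trans_le (Nat.le_of_dvd (Fintype.card_pos_iff.mpr ⟨⟨0, hzero⟩⟩) hdvd)
  obtain ⟨⟨x, hx⟩, hne⟩ := Fintype.exists_ne_of_one_lt_card hone ⟨0, hzero⟩
  obtain ⟨i, hi⟩ := Function.ne_iff.mp (Subtype.coe_ne_coe.mpr hne)
  refine ⟨fun i ↦ (x i).cast, ⟨i, ?_⟩, ?_⟩ <;>
    rw [← ZMod.intCast_zmod_eq_zero_iff_dvd]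
  · simpa using hi
  · rw [← hg, ← hx]
    simp

theorem exists_pow_dvd_of_not_dvd_polar (Q : QuadraticForm ℤ M) {p : ℕ} (hp : p.Prime) {v u : M}
    (hv : (p : ℤ) ∣ Q v) (hu : ¬ (p : ℤ) ∣ QuadraticMap.polar Q v u) (k : ℕ) :
    ∃ w, (p : ℤ) ^ (k + 1) ∣ Q w ∧ ¬ (p : ℤ) ∣ QuadraticMap.polar Q w u := by
  induction k with
  | zero => exact ⟨v, by simpa using hv, hu⟩
  | succ k ih =>
    obtain ⟨w, ⟨c, hc⟩, hwu⟩ := ih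
    have hcop : IsCoprime (QuadraticMap.polar Q w u) (p : ℤ) :=
      ((Nat.prime_iff_prime_int.mp hp).coprime_iff_not_dvd.mpr hwu).symm
    obtain ⟨a, b, hab⟩ := hcop
    have hw' : Q (w + (-(c * a) * p ^ (k + 1)) • u) =
        p ^ (k + 2) * (c * b + c ^ 2 * a ^ 2 * p ^ k * Q u) := by
      rw [QuadraticMap.map_add Q, QuadraticMap.map_smul, QuadraticMap.polar_smul_right, hc]
      simp only [smul_eq_mul]
      linear_combination -(c * p ^ (k + 1)) * hab
    refine ⟨_, ⟨_, hw'⟩, ?_⟩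
    rw [QuadraticMap.polar_add_left, QuadraticMap.polar_smul_left, smul_eq_mul]
    rwa [dvd_add_left (((dvd_pow_self _ k.succ_ne_zero).mul_left _).mul_right _)]

theorem exists_eq_smul_of_forall_dvd {R : Type*} [CommRing R] [IsDomain R] [Module R M]
    (Q : QuadraticForm R M) {a : R} (ha : a ≠ 0) (h : ∀ v, a ∣ Q v) :
    ∃ Q' : QuadraticForm R M, Q = a • Q' := by
  choose g hg using h
  have hpolar (v w : M) : QuadraticMap.polar Q v w = a * QuadraticMap.polar g v w := by
    simp only [QuadraticMap.polar, hg]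
    ring
  refine ⟨QuadraticMap.ofPolar g ?_ ?_ ?_, QuadraticMap.ext hg⟩
  · intro c v
    apply mul_left_cancel₀ ha
    rw [← hg, QuadraticMap.map_smul, hg, smul_eq_mul, smul_eq_mul]
    ring
  · intro v v' w
    apply mul_left_cancel₀ ha
    rw [mul_add, ← hpolar, ← hpolar, ← hpolar, QuadraticMap.polar_add_left]
  · intro c v w
    apply mul_left_cancel₀ ha
    rw [← hpolar, QuadraticMap.polar_smul_left, hpolar, smul_eq_mul, smul_eq_mul]
    ring

/-- The sublattice of zeros modulo `p` of an integral quadratic form all of whose zeros modulo `p`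
are singular. -/
def zeroSublattice (Q : QuadraticForm ℤ M) (p : ℕ)
    (hQ : ∀ v u, (p : ℤ) ∣ Q v → (p : ℤ) ∣ QuadraticMap.polar Q v u) : Submodule ℤ M where
  carrier := {v | (p : ℤ) ∣ Q v}
  zero_mem' := by simp
  add_mem' {v w} hv hw := by
    change (p : ℤ) ∣ Q (v + w)
    rw [QuadraticMap.map_add Q]
    exact dvd_add (dvd_add hv hw) (hQ v w hv)
  smul_mem' c v hv := by
    change (p : ℤ) ∣ Q (c • v)
    rw [QuadraticMap.map_smul]
    exact hv.mul_left (c * c)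

theorem smul_mem_zeroSublattice (Q : QuadraticForm ℤ M) (p : ℕ)
    (hQ : ∀ v u, (p : ℤ) ∣ Q v → (p : ℤ) ∣ QuadraticMap.polar Q v u) (v : M) :
    (p : ℤ) • v ∈ zeroSublattice Q p hQ := by
  change (p : ℤ) ∣ Q ((p : ℤ) • v)
  rw [QuadraticMap.map_smul, smul_eq_mul, mul_assoc]
  exact dvd_mul_right _ _

theorem finite_and_card_le_of_forall_dvd_map_eq_zero [Module.Finite ℤ M] (Q : QuadraticForm ℤ M)
    {p : ℕ} [Fact p.Prime] {V : Type*} [AddCommGroup V] [Module (ZMod p) V] (π : M →ₗ[ℤ] V)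
    (hπ : Function.Surjective π) (hQ : ∀ v, (p : ℤ) ∣ Q v → π v = 0) :
    Finite V ∧ Nat.card V ≤ p ^ 2 := by
  have : Module.Finite ℤ V := Module.Finite.of_surjective π hπ
  have : Module.Finite (ZMod p) V := Module.Finite.of_restrictScalars_finite ℤ _ _
  have hrank : Module.finrank (ZMod p) V ≤ 2 := by
    by_contra! hlt
    obtain ⟨f, hf⟩ := exists_linearIndependent_of_le_finrank (n := 3) hlt
    choose e he using fun i ↦ hπ (f i)
    obtain ⟨x, ⟨i, hi⟩, hx⟩ :=
      exists_dvd_sum_smul_of_two_lt_card Q (Fact.out : p.Prime) e (by simp)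
    have hsum : ∑ i, (x i : ZMod p) • f i = 0 := by
      simpa only [map_sum, map_zsmul, he, Int.cast_smul_eq_zsmul] using hQ _ hx
    exact hi <| (ZMod.intCast_zmod_eq_zero_iff_dvd _ _).mp <|
      Fintype.linearIndependent_iff.mp hf _ hsum i
  refine ⟨Module.finite_of_finite (ZMod p), ?_⟩
  rw [Module.natCard_eq_pow_finrank (K := ZMod p), Nat.card_zmod]
  exact Nat.pow_le_pow_right (NeZero.pos p) hrank

theorem finite_quotient_zeroSublattice_and_card_le [Module.Finite ℤ M] (Q : QuadraticForm ℤ M)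
    {p : ℕ} (hp : p.Prime)
    (hQ : ∀ v u, (p : ℤ) ∣ Q v → (p : ℤ) ∣ QuadraticMap.polar Q v u) :
    Finite (M ⧸ zeroSublattice Q p hQ) ∧ Nat.card (M ⧸ zeroSublattice Q p hQ) ≤ p ^ 2 := by
  have : Fact p.Prime := ⟨hp⟩
  set H := zeroSublattice Q p hQ
  let _ : Module (ZMod p) (M ⧸ H) := AddCommGroup.zmodModule fun x ↦ by
    obtain ⟨v, rfl⟩ := H.mkQ_surjective x
    rw [← map_nsmul, Submodule.mkQ_apply, Submodule.Quotient.mk_eq_zero, ← natCast_zsmul]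
    exact smul_mem_zeroSublattice Q p hQ v
  exact finite_and_card_le_of_forall_dvd_map_eq_zero Q (p := p) H.mkQ H.mkQ_surjective
    fun v hv ↦ (Submodule.Quotient.mk_eq_zero H).mpr hv

/-- The discriminant of an integral quadratic form, without the usual powers of `2`: the
determinant of its polar form in a basis. -/
def polarDiscr {ι : Type*} [Fintype ι] [DecidableEq ι] (b : Module.Basis ι ℤ M)
    (Q : QuadraticForm ℤ M) : ℤ :=
  (LinearMap.BilinForm.toMatrix b Q.polarBilin).det

section Discr

variable {ι : Type*} [Fintype ι] [DecidableEq ι] (b : Module.Basis ι ℤ M)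

theorem polarDiscr_comp (Q : QuadraticForm ℤ M) (f : M →ₗ[ℤ] M) :
    polarDiscr b (Q.comp f) = LinearMap.det f ^ 2 * polarDiscr b Q := by
  have h : LinearMap.BilinForm.toMatrix b (Q.comp f).polarBilin =
      (LinearMap.toMatrix b b f)ᵀ * LinearMap.BilinForm.toMatrix b Q.polarBilin *
        LinearMap.toMatrix b b f :=
    (congrArg _ (QuadraticMap.polarBilin_comp Q f)).trans
      (LinearMap.BilinForm.toMatrix_comp b b Q.polarBilin f f)
  rw [polarDiscr, h, Matrix.det_mul, Matrix.det_mul, Matrix.det_transpose, LinearMap.det_toMatrix,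
    polarDiscr]
  ring

theorem polarDiscr_smul (a : ℤ) (Q : QuadraticForm ℤ M) :
    polarDiscr b (a • Q) = a ^ Fintype.card ι * polarDiscr b Q := by
  have h : LinearMap.BilinForm.toMatrix b (a • Q).polarBilin =
      a • LinearMap.BilinForm.toMatrix b Q.polarBilin := by
    ext i j
    rw [LinearMap.BilinForm.toMatrix_apply, Matrix.smul_apply, LinearMap.BilinForm.toMatrix_apply]
    exact QuadraticMap.polar_smul Q a _ _
  rw [polarDiscr, h, Matrix.det_smul, polarDiscr]

theorem exists_comp_eq_smul_of_forall_singular (Q : QuadraticForm ℤ M) {p : ℕ} (hp : p.Prime)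
    (hQ : ∀ v u, (p : ℤ) ∣ Q v → (p : ℤ) ∣ QuadraticMap.polar Q v u)
    (hdisc : polarDiscr b Q ≠ 0) (hcard : 5 ≤ Fintype.card ι) :
    ∃ (f : M →ₗ[ℤ] M) (Q' : QuadraticForm ℤ M), Function.Injective f ∧
      (∀ v, (p : ℤ) • v ∈ LinearMap.range f) ∧ Q.comp f = (p : ℤ) • Q' ∧
      polarDiscr b Q' ≠ 0 ∧ (polarDiscr b Q').natAbs < (polarDiscr b Q).natAbs := by
  have : Module.Finite ℤ M := Module.Finite.of_basis b
  have : Module.Free ℤ M := Module.Free.of_basis b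
  obtain ⟨hfin, hindex⟩ := finite_quotient_zeroSublattice_and_card_le Q hp hQ
  set H := zeroSublattice Q p hQ
  let e : M ≃ₗ[ℤ] H := LinearEquiv.ofFinrankEq _ _ (H.finiteQuotient_iff.mp hfin).symm
  let f : M →ₗ[ℤ] M := H.subtype ∘ₗ e
  have hdet : (LinearMap.det f).natAbs = Nat.card (M ⧸ H) := H.natAbs_det_equiv e
  have hp0 : (p : ℤ) ≠ 0 := mod_cast hp.ne_zero
  obtain ⟨Q', hQ'⟩ := exists_eq_smul_of_forall_dvd (Q.comp f) hp0 fun v ↦ (e v).2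
  have hdiscr : p ^ Fintype.card ι * (polarDiscr b Q').natAbs =
      Nat.card (M ⧸ H) ^ 2 * (polarDiscr b Q).natAbs := by
    have := congrArg Int.natAbs
      ((polarDiscr_smul b p Q').symm.trans (hQ' ▸ polarDiscr_comp b Q f))
    rwa [Int.natAbs_mul, Int.natAbs_mul, Int.natAbs_pow, Int.natAbs_pow, Int.natAbs_natCast,
      hdet] at this
  have hpos : 0 < (polarDiscr b Q).natAbs := Int.natAbs_pos.mpr hdisc
  refine ⟨f, Q', H.subtype_injective.comp e.injective,
    fun v ↦ ⟨e.symm ⟨_, smul_mem_zeroSublattice Q p hQ v⟩, by simp [f]⟩, hQ', ?_, ?_⟩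
  · rintro h0
    rw [h0, Int.natAbs_zero, mul_zero] at hdiscr
    exact absurd hdiscr (mul_pos (pow_pos Nat.card_pos 2) hpos).ne
  · refine lt_of_mul_lt_mul_left' (a := p ^ 5) ?_
    calc p ^ 5 * (polarDiscr b Q').natAbs
        ≤ p ^ Fintype.card ι * (polarDiscr b Q').natAbs :=
          Nat.mul_le_mul_right _ (Nat.pow_le_pow_right hp.pos hcard)
      _ = Nat.card (M ⧸ H) ^ 2 * (polarDiscr b Q).natAbs := hdiscr
      _ ≤ (p ^ 2) ^ 2 * (polarDiscr b Q).natAbs := by gcongr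
      _ < p ^ 5 * (polarDiscr b Q).natAbs := by
          rw [← pow_mul]
          exact Nat.mul_lt_mul_of_pos_right (Nat.pow_lt_pow_right hp.one_lt (by norm_num)) hpos

/-- A form with a nonsingular zero modulo `p` is handled by Hensel's lemma. Otherwise, the zeros
modulo `p` are a sublattice of index at most `p ^ 2`, on which the form is divisible by `p`;
dividing it by `p` yields a form of smaller discriminant. -/
theorem exists_primitive_pow_dvd (hcard : 5 ≤ Fintype.card ι) (Q : QuadraticForm ℤ M)
    (hdisc : polarDiscr b Q ≠ 0) {p : ℕ} (hp : p.Prime) (k : ℕ) :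
    ∃ v, (∀ u, v ≠ (p : ℤ) • u) ∧ (p : ℤ) ^ k ∣ Q v := by
  induction hd : (polarDiscr b Q).natAbs using Nat.strong_induction_on generalizing Q k with
  | _ d ih =>
    by_cases hQ : ∀ v u, (p : ℤ) ∣ Q v → (p : ℤ) ∣ QuadraticMap.polar Q v u
    · obtain ⟨f, Q', hinj, hrange, hQ', hdisc', hlt⟩ :=
        exists_comp_eq_smul_of_forall_singular b Q hp hQ hdisc hcard
      have hval (v : M) : Q (f v) = p * Q' v := DFunLike.congr_fun hQ' v
      obtain ⟨v, hv, hdvd⟩ := ih _ (hd ▸ hlt) Q' hdisc' (k + 1) rfl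
      by_cases hprim : ∀ u, f v ≠ (p : ℤ) • u
      · exact ⟨f v, hprim, hval v ▸ ((pow_dvd_pow _ k.le_succ).trans hdvd).mul_left _⟩
      · push Not at hprim
        obtain ⟨u, hu⟩ := hprim
        have hp0 : (p : ℤ) ≠ 0 := mod_cast hp.ne_zero
        refine ⟨u, ?_, ?_⟩
        · rintro t rfl
          obtain ⟨s, hs⟩ := hrange t
          exact hv s (hinj (by rw [hu, map_smul, hs]))
        · have : Q' v = p * Q u := mul_left_cancel₀ hp0 <| by
            rw [← hval, hu, QuadraticMap.map_smul, smul_eq_mul, mul_assoc]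
          rw [this, pow_succ'] at hdvd
          exact (mul_dvd_mul_iff_left hp0).mp hdvd
    · push Not at hQ
      obtain ⟨v, u, hv, hu⟩ := hQ
      obtain ⟨w, hw, hwu⟩ := exists_pow_dvd_of_not_dvd_polar Q hp hv hu k
      refine ⟨w, ?_, (pow_dvd_pow _ k.le_succ).trans hw⟩
      rintro t rfl
      exact hwu (by rw [QuadraticMap.polar_smul_left]; exact dvd_mul_right _ _)

end Discr

end Isotropy

section IntForm

variable {ι : Type*} [Fintype ι] [DecidableEq ι]

/-- The quadratic form `v ↦ vᵀ A v` over `R` given by an integer matrix `A`, which need not be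
symmetric: the matrix of its polar form is `A + Aᵀ`. -/
def intForm (A : Matrix ι ι ℤ) (R : Type*) [CommRing R] : QuadraticForm R (ι → R) :=
  (A.map (Int.cast : ℤ → R)).toQuadraticForm'

variable (A : Matrix ι ι ℤ) {R S : Type*} [CommRing R] [CommRing S]

theorem intForm_apply (v : ι → R) :
    intForm A R v = v ⬝ᵥ (A.map (Int.cast : ℤ → R)) *ᵥ v :=
  Matrix.toLinearMap₂'_apply' _ v v

theorem polar_intForm (v w : ι → R) :
    QuadraticMap.polar (intForm A R) v w = ((A + Aᵀ).map (Int.cast : ℤ → R) *ᵥ v) ⬝ᵥ w := by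
  have hmap : (A + Aᵀ).map (Int.cast : ℤ → R) = A.map Int.cast + (A.map Int.cast)ᵀ := by
    ext; simp
  simp only [QuadraticMap.polar, intForm_apply, hmap, Matrix.mulVec_add, add_dotProduct,
    dotProduct_add, Matrix.add_mulVec, Matrix.mulVec_transpose]
  rw [Matrix.dotProduct_mulVec v _ w, dotProduct_comm w]
  ring

theorem map_intForm (φ : R →+* S) (v : ι → R) : φ (intForm A R v) = intForm A S (φ ∘ v) := by
  rw [intForm_apply, intForm_apply, RingHom.map_dotProduct]
  congr 1
  ext i
  rw [Function.comp_apply, RingHom.map_mulVec, Matrix.map_map]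
  congr 2
  ext
  simp

theorem intCast_intForm (v : ι → ℤ) :
    (intForm A ℤ v : R) = intForm A R fun i ↦ (v i : R) :=
  map_intForm A (Int.castRingHom R) v

theorem polarDiscr_intForm : polarDiscr (Pi.basisFun ℤ ι) (intForm A ℤ) = (A + Aᵀ).det := by
  refine congrArg Matrix.det (Matrix.ext fun i j ↦ ?_)
  rw [LinearMap.BilinForm.toMatrix_apply, Pi.basisFun_apply, Pi.basisFun_apply]
  refine (polar_intForm A _ _).trans ?_
  simp [add_comm]

theorem exists_not_dvd_mulVec {N : Matrix ι ι ℤ} {p : ℕ} (hp : p.Prime) {d : ℕ}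
    (hdet : ¬ (p : ℤ) ^ (d + 1) ∣ N.det) {v : ι → ℤ} {i : ι} (hv : ¬ (p : ℤ) ∣ v i) :
    ∃ j, ¬ (p : ℤ) ^ (d + 1) ∣ (N *ᵥ v) j := by
  by_contra! h
  have hadj : N.det * v i = ∑ j, N.adjugate i j * (N *ᵥ v) j := by
    have : N.adjugate *ᵥ (N *ᵥ v) = N.det • v := by
      rw [Matrix.mulVec_mulVec, Matrix.adjugate_mul, Matrix.smul_mulVec, Matrix.one_mulVec]
    exact (congrFun this i).symm
  have hdvd : (p : ℤ) ^ (d + 1) ∣ N.det * v i :=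
    hadj ▸ Finset.dvd_sum fun j _ ↦ (h j).mul_left _
  have hcop : IsCoprime ((p : ℤ) ^ (d + 1)) (v i) :=
    ((Nat.prime_iff_prime_int.mp hp).coprime_iff_not_dvd.mpr hv).pow_left
  exact hdet (hcop.dvd_of_dvd_mul_right hdvd)

end IntForm

section Counting

theorem ncard_sep_eq_add {V C : Type*} [AddCommGroup V] [AddCommGroup C] (H : AddSubgroup V)
    (f : V → C) {X : Set V} {c : C} (hX : ∀ v ∈ X, ∀ h ∈ H, v + h ∈ X)
    (hf : ∀ v ∈ X, ∃ h ∈ H, ∀ w, w - v ∈ H → f (w + h) = f w + c) (t : C) :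
    {v ∈ X | f v = t}.ncard = {v ∈ X | f v = t + c}.ncard := by
  choose! s hsH hs using hf
  classical
  let r (v : V) : V := (QuotientAddGroup.mk v : V ⧸ H).out
  have hr (v : V) : v - r v ∈ H := by
    rw [sub_eq_neg_add]
    exact QuotientAddGroup.eq.mp (QuotientAddGroup.out_eq' _)
  have hrX {v : V} : r v ∈ X ↔ v ∈ X :=
    ⟨fun h ↦ by simpa using hX _ h _ (hr v), fun h ↦ by simpa using hX _ h _ (H.neg_mem (hr v))⟩
  let g (v : V) : V := if v ∈ X then s (r v) else 0
  have hg (v : V) : g v ∈ H := by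
    by_cases hv : v ∈ X <;> simp [g, hv, hsH _ (hrX.mpr _), H.zero_mem]
  have hmem {v h : V} (hh : h ∈ H) : v + h ∈ X ↔ v ∈ X :=
    ⟨fun hv ↦ by simpa using hX _ hv _ (H.neg_mem hh), fun hv ↦ hX _ hv _ hh⟩
  have hgadd {v h : V} (hh : h ∈ H) : g (v + h) = g v := by
    have : r (v + h) = r v := congrArg Quotient.out (QuotientAddGroup.mk_add_of_mem v hh)
    simp [g, this, hmem hh]
  let e : V ≃ V :=
    { toFun := fun v ↦ v + g v
      invFun := fun v ↦ v - g v
      left_inv := fun v ↦ by simp [hgadd (hg v)]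
      right_inv := fun v ↦ by simp [sub_eq_add_neg, hgadd (H.neg_mem (hg v))] }
  refine Nat.card_congr (e.subtypeEquiv fun v ↦ ?_)
  change v ∈ X ∧ f v = t ↔ v + g v ∈ X ∧ f (v + g v) = t + c
  rw [hmem (hg v)]
  refine and_congr_right fun hv ↦ ?_
  rw [show g v = s (r v) from if_pos hv, hs _ (hrX.mpr hv) v (hr v), add_left_inj]

theorem ncard_sep_quadraticForm_eq_add {R V : Type*} [CommRing R] [AddCommGroup V] [Module R V]
    (Q : QuadraticForm R V) {X : Set V} {a b : R} (ha : a * a = 0)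
    (hX : ∀ v ∈ X, ∀ u, v + a • u ∈ X) (hb : ∀ v ∈ X, ∃ u, QuadraticMap.polar Q v u = b) (t : R) :
    {v ∈ X | Q v = t}.ncard = {v ∈ X | Q v = t + a * b}.ncard := by
  refine ncard_sep_eq_add (DistribSMul.toAddMonoidHom V a).range Q ?_ ?_ t
  · rintro v hv _ ⟨u, rfl⟩
    exact hX v hv u
  · intro v hv
    obtain ⟨u, hu⟩ := hb v hv
    refine ⟨a • u, ⟨u, rfl⟩, fun w ⟨u', hw⟩ ↦ ?_⟩
    obtain rfl : w = v + a • u' := eq_add_of_sub_eq' hw.symm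
    rw [QuadraticMap.map_add Q _ (a • u), QuadraticMap.map_smul, QuadraticMap.polar_smul_right,
      QuadraticMap.polar_add_left, QuadraticMap.polar_smul_left, hu, ha]
    linear_combination QuadraticMap.polar Q u' u * ha

theorem card_mul_ncard_preimage {G H : Type*} [AddGroup G] [AddGroup H] (f : G →+ H)
    (hf : Function.Surjective f) (S : Set H) :
    Nat.card H * (f ⁻¹' S).ncard = Nat.card G * S.ncard := by
  let s := Function.surjInv hf
  have hs (y : H) : f (s y) = y := Function.surjInv_eq hf y
  let e : f ⁻¹' S ≃ f.ker × S :=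
    { toFun := fun x ↦ (⟨x - s (f x), by simp [hs]⟩, ⟨f x, x.2⟩)
      invFun := fun y ↦ ⟨y.1 + s y.2, by simp [hs, (f.mem_ker).mp y.1.2]⟩
      left_inv := fun x ↦ by simp
      right_inv := fun y ↦ by
        ext <;> simp [hs, (f.mem_ker).mp y.1.2] }
  have hker : Nat.card f.ker * Nat.card H = Nat.card G := by
    rw [← AddSubgroup.card_mul_index f.ker, AddSubgroup.index_ker, f.range_eq_top.mpr hf,
      AddSubgroup.card_top]
  calc Nat.card H * (f ⁻¹' S).ncard = Nat.card H * Nat.card (f.ker × S) := by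
        rw [← Nat.card_congr e]; rfl
    _ = Nat.card f.ker * Nat.card H * Nat.card S := by rw [Nat.card_prod]; ring
    _ = Nat.card G * S.ncard := by rw [hker, Nat.card_coe_set_eq]

theorem exists_mul_eq_natCast_pow {p d : ℕ} (hp : p.Prime) {g : ℤ} (hg : ¬ (p : ℤ) ^ (d + 1) ∣ g)
    (r : ℕ) : ∃ c : ZMod (p ^ r), (g : ZMod (p ^ r)) * c = (p : ZMod (p ^ r)) ^ d := by
  have hdvd : g.gcd (p ^ r : ℤ) ∣ p ^ r := by
    simpa [Int.natAbs_pow] using Int.gcd_dvd_natAbs_right g (p ^ r : ℤ)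
  obtain ⟨j, -, hj⟩ := (Nat.dvd_prime_pow hp).mp hdvd
  have hjd : j ≤ d := by
    by_contra! hlt
    refine hg ((pow_dvd_pow _ hlt).trans ?_)
    exact_mod_cast hj ▸ Int.gcd_dvd_left g (p ^ r : ℤ)
  obtain ⟨c, hc⟩ := pow_dvd_pow (p : ZMod (p ^ r)) hjd
  refine ⟨(g.gcdA (p ^ r) : ℤ) * c, ?_⟩
  have hbez := congrArg (Int.cast : ℤ → ZMod (p ^ r)) (Int.gcd_eq_gcd_ab g (p ^ r : ℤ))
  have hzero : (p : ZMod (p ^ r)) ^ r = 0 := mod_cast ZMod.natCast_self (p ^ r)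
  push_cast [hj, hzero, zero_mul, add_zero] at hbez
  rw [hc, hbez, mul_assoc]

theorem ncard_eq_card_mul_of_forall_ncard_sep {V C : Type*} {S : Set V} (hS : S.Finite) (f : V → C)
    {T : Finset C} (hT : ∀ v ∈ S, f v ∈ T) {c : ℕ} (hc : ∀ t ∈ T, {v ∈ S | f v = t}.ncard = c) :
    S.ncard = T.card * c := by
  classical
  rw [Set.ncard_eq_toFinset_card S hS,
    Finset.card_eq_sum_card_fiberwise (f := f) (t := T) fun v hv ↦ hT v (hS.mem_toFinset.mp hv)]
  refine (Finset.sum_congr rfl fun t ht ↦ ?_).trans (by rw [sum_const, smul_eq_mul])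
  rw [← hc t ht, ← Set.ncard_coe_finset, Finset.coe_filter]
  congr 1
  ext v
  simp

theorem exists_lt_eq_mul_pow_of_mul_eq_zero {p k : ℕ} [NeZero p] {x : ZMod (p ^ (k + 1))}
    (hx : p * x = 0) : ∃ j < p, x = (j * p ^ k : ℕ) := by
  have hdvd : p ^ (k + 1) ∣ p * x.val := by
    rw [← ZMod.natCast_eq_zero_iff, Nat.cast_mul, ZMod.natCast_zmod_val, hx]
  obtain ⟨j, hj⟩ :=
    (Nat.mul_dvd_mul_iff_left (NeZero.pos p)).mp ((pow_succ' p k).symm.dvd.trans hdvd)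
  refine ⟨j, ?_, ?_⟩
  · have := x.val_lt
    rw [hj, pow_succ] at this
    exact lt_of_mul_lt_mul_left' this
  · rw [mul_comm, ← hj, ZMod.natCast_zmod_val]

theorem injOn_natCast_mul_pow (p k : ℕ) [NeZero p] :
    Set.InjOn (fun j : ℕ ↦ ((j * p ^ k : ℕ) : ZMod (p ^ (k + 1)))) (range p) := by
  have hlt {j : ℕ} (hj : j ∈ (range p : Set ℕ)) : j * p ^ k < p ^ (k + 1) := by
    rw [pow_succ']
    exact Nat.mul_lt_mul_of_pos_right (mem_range.mp hj) (pow_pos (NeZero.pos p) k)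
  intro i hi j hj hij
  rw [ZMod.natCast_eq_natCast_iff', Nat.mod_eq_of_lt (hlt hi), Nat.mod_eq_of_lt (hlt hj)] at hij
  exact Nat.eq_of_mul_eq_mul_right (pow_pos (NeZero.pos p) k) hij

theorem mul_ncard_zeros_eq {p k d : ℕ} [NeZero p] (hk : 2 * d + 1 ≤ k) {V : Type*}
    [Finite V] [AddCommGroup V] [Module (ZMod (p ^ (k + 1))) V]
    (Q : QuadraticForm (ZMod (p ^ (k + 1))) V) {X : Set V}
    (hX : ∀ v ∈ X, ∀ u, v + (p : ZMod (p ^ (k + 1))) ^ (k - d) • u ∈ X)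
    (hreg : ∀ v ∈ X, ∃ u, QuadraticMap.polar Q v u = (p : ZMod (p ^ (k + 1))) ^ d) :
    {v ∈ X | p * Q v = 0}.ncard = p * {v ∈ X | Q v = 0}.ncard := by
  classical
  have hpow : (p : ZMod (p ^ (k + 1))) ^ (k + 1) = 0 := mod_cast ZMod.natCast_self (p ^ (k + 1))
  have hsq : (p : ZMod (p ^ (k + 1))) ^ (k - d) * (p : ZMod (p ^ (k + 1))) ^ (k - d) = 0 := by
    rw [← pow_add]
    exact pow_eq_zero_of_le (by omega) hpow
  have hfib (j : ℕ) : {v ∈ X | Q v = (j * p ^ k : ℕ)}.ncard = {v ∈ X | Q v = 0}.ncard := by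
    induction j with
    | zero => simp
    | succ j ih =>
      rw [← ih, ncard_sep_quadraticForm_eq_add Q hsq hX hreg (j * p ^ k : ℕ), ← pow_add,
        Nat.sub_add_cancel (by omega)]
      simp only [Nat.cast_mul, Nat.cast_add, Nat.cast_pow, add_mul, one_mul]
  rw [ncard_eq_card_mul_of_forall_ncard_sep (Set.toFinite _) Q
    (T := (range p).image fun j ↦ ((j * p ^ k : ℕ) : ZMod (p ^ (k + 1)))) ?_ ?_,
    card_image_of_injOn (injOn_natCast_mul_pow p k), card_range]
  · rintro v ⟨-, hv⟩
    obtain ⟨j, hj, hjv⟩ := exists_lt_eq_mul_pow_of_mul_eq_zero hv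
    exact mem_image.mpr ⟨j, mem_range.mpr hj, hjv.symm⟩
  · simp only [mem_image]
    rintro _ ⟨j, -, rfl⟩
    rw [← hfib j]
    congr 1
    ext v
    refine ⟨fun h ↦ ⟨h.1.1, h.2⟩, fun h ↦ ⟨⟨h.1, ?_⟩, h.2⟩⟩
    rw [h.2, Nat.cast_mul, Nat.cast_pow, mul_left_comm, ← pow_succ', hpow, mul_zero]

end Counting

section CongruentZeros

theorem exists_intCast_eq {ι : Type*} {r : ℕ} (v : ι → ZMod r) :
    ∃ z : ι → ℤ, (fun i ↦ (z i : ZMod r)) = v :=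
  (ZMod.intCast_surjective (n := r)).comp_left v

theorem ncard_preimage_cast_pow_succ {ι : Type*} [Fintype ι] {p : ℕ} [NeZero p] (k : ℕ)
    (S : Set (ι → ZMod (p ^ k))) :
    {v : ι → ZMod (p ^ (k + 1)) | (fun i ↦ ((v i).cast : ZMod (p ^ k))) ∈ S}.ncard =
      p ^ Fintype.card ι * S.ncard := by
  have hdvd : p ^ k ∣ p ^ (k + 1) := pow_dvd_pow p k.le_succ
  have h := card_mul_ncard_preimage ((ZMod.castHom hdvd (ZMod (p ^ k))).compLeft ι).toAddMonoidHom
    (ZMod.castHom_surjective hdvd).comp_left S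
  simp only [Nat.card_fun, Nat.card_zmod, Nat.card_eq_fintype_card (α := ι)] at h
  exact Nat.eq_of_mul_eq_mul_left (pow_pos (pow_pos (NeZero.pos p) k) _) (h.trans (by ring))

variable {ι : Type*} [Fintype ι] [DecidableEq ι] (A : Matrix ι ι ℤ) {p : ℕ}

/-- The zeros modulo `r` of the form given by `A` whose reduction modulo `q` lies in `X`. This is
meaningful when `q ∣ r`; the reduction is a junk value otherwise. -/
def congruentZeros {q : ℕ} (X : Set (ι → ZMod q)) (r : ℕ) : Set (ι → ZMod r) :=
  {v | intForm A (ZMod r) v = 0 ∧ (fun i ↦ ((v i).cast : ZMod q)) ∈ X}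

theorem intForm_intCast_eq_zero_iff (r : ℕ) (z : ι → ℤ) :
    (intForm A (ZMod r) fun i ↦ (z i : ZMod r)) = 0 ↔ (r : ℤ) ∣ intForm A ℤ z := by
  rw [← intCast_intForm, ZMod.intCast_zmod_eq_zero_iff_dvd]

theorem intCast_mem_congruentZeros {q r : ℕ} (hqr : q ∣ r) {X : Set (ι → ZMod q)} {z : ι → ℤ} :
    (fun i ↦ (z i : ZMod r)) ∈ congruentZeros A X r ↔
      (r : ℤ) ∣ intForm A ℤ z ∧ (fun i ↦ (z i : ZMod q)) ∈ X := by
  simp only [congruentZeros, Set.mem_ofPred_eq, intForm_intCast_eq_zero_iff, ZMod.cast_intCast hqr]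

theorem ncard_sep_mul_intForm_eq_zero [NeZero p] {k q : ℕ} (hq : q ∣ p ^ k)
    (X : Set (ι → ZMod q)) :
    {v : ι → ZMod (p ^ (k + 1)) | (fun i ↦ ((v i).cast : ZMod q)) ∈ X ∧
      p * intForm A (ZMod (p ^ (k + 1))) v = 0}.ncard =
      p ^ Fintype.card ι * (congruentZeros A X (p ^ k)).ncard := by
  rw [← ncard_preimage_cast_pow_succ]
  congr 1
  ext v
  obtain ⟨z, rfl⟩ := exists_intCast_eq v
  have hdvd : (p : ZMod (p ^ (k + 1))) * intForm A _ (fun i ↦ (z i : ZMod (p ^ (k + 1)))) = 0 ↔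
      ((p ^ k : ℕ) : ℤ) ∣ intForm A ℤ z := by
    rw [← intCast_intForm, ← Int.cast_natCast, ← Int.cast_mul, ZMod.intCast_zmod_eq_zero_iff_dvd,
      pow_succ', Nat.cast_mul, mul_dvd_mul_iff_left (mod_cast NeZero.ne p)]
  have hkk : p ^ k ∣ p ^ (k + 1) := pow_dvd_pow p k.le_succ
  simp only [Set.mem_ofPred_eq, ZMod.cast_intCast hkk, ZMod.cast_intCast (hq.trans hkk), hdvd,
    intCast_mem_congruentZeros A hq]
  exact and_comm

theorem exists_polar_intForm_eq_pow (hp : p.Prime) {d : ℕ} {z : ι → ℤ} {i : ι}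
    (hi : ¬ (p : ℤ) ^ (d + 1) ∣ ((A + Aᵀ) *ᵥ z) i) (k : ℕ) :
    ∃ u, QuadraticMap.polar (intForm A (ZMod (p ^ k))) (fun i ↦ (z i : ZMod (p ^ k))) u =
      (p : ZMod (p ^ k)) ^ d := by
  obtain ⟨c, hc⟩ := exists_mul_eq_natCast_pow hp hi k
  refine ⟨Pi.single i c, ?_⟩
  rw [polar_intForm, dotProduct_single, ← hc]
  exact congrArg (· * c) (RingHom.map_mulVec (Int.castRingHom (ZMod (p ^ k))) _ z i).symm

theorem mul_ncard_congruentZeros_succ (hp : p.Prime) {k d q : ℕ} (hk : 2 * d + 1 ≤ k)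
    (hq : q ∣ p ^ (k - d)) {X : Set (ι → ZMod q)}
    (hreg : ∀ z : ι → ℤ, (fun i ↦ (z i : ZMod q)) ∈ X →
      ∃ i, ¬ (p : ℤ) ^ (d + 1) ∣ ((A + Aᵀ) *ᵥ z) i) :
    p * (congruentZeros A X (p ^ (k + 1))).ncard =
      p ^ Fintype.card ι * (congruentZeros A X (p ^ k)).ncard := by
  have : NeZero p := ⟨hp.ne_zero⟩
  have hqk : q ∣ p ^ k := hq.trans (pow_dvd_pow p (k.sub_le d))
  set r := p ^ (k + 1)
  let X' : Set (ι → ZMod r) := {v | (fun i ↦ ((v i).cast : ZMod q)) ∈ X}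
  have hmem (z : ι → ℤ) : (fun i ↦ (z i : ZMod r)) ∈ X' ↔ (fun i ↦ (z i : ZMod q)) ∈ X := by
    simp only [X', Set.mem_ofPred_eq, ZMod.cast_intCast (hqk.trans (pow_dvd_pow p k.le_succ))]
  have hshift : ∀ v ∈ X', ∀ u, v + (p : ZMod r) ^ (k - d) • u ∈ X' := by
    intro v hv u
    obtain ⟨z, rfl⟩ := exists_intCast_eq v
    obtain ⟨y, rfl⟩ := exists_intCast_eq u
    have hzero : (p : ZMod q) ^ (k - d) = 0 := mod_cast (ZMod.natCast_eq_zero_iff _ _).mpr hq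
    have h := (hmem fun i ↦ z i + p ^ (k - d) * y i).mpr (by simpa [hzero] using (hmem z).mp hv)
    simpa [Pi.add_def] using! h
  have hpolar : ∀ v ∈ X', ∃ u, QuadraticMap.polar (intForm A (ZMod r)) v u = (p : ZMod r) ^ d := by
    intro v hv
    obtain ⟨z, rfl⟩ := exists_intCast_eq v
    obtain ⟨i, hi⟩ := hreg z ((hmem z).mp hv)
    exact exists_polar_intForm_eq_pow A hp hi (k + 1)
  have hswap : {v ∈ X' | intForm A (ZMod r) v = 0} = congruentZeros A X r :=
    Set.ext fun _ ↦ and_comm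
  rw [← ncard_sep_mul_intForm_eq_zero A hqk X, ← hswap]
  exact (mul_ncard_zeros_eq hk _ hshift hpolar).symm

/-- Multiplication by `p`, as a homomorphism from `ℤ/p^k` onto the multiples of `p` in
`ℤ/p^(k+1)`. -/
def mulHomPowSucc (p k : ℕ) : ZMod (p ^ k) →+ ZMod (p ^ (k + 1)) :=
  ZMod.lift (p ^ k) ⟨zmultiplesHom (ZMod (p ^ (k + 1))) p, by
    simpa [← pow_succ] using (mod_cast ZMod.natCast_self (p ^ (k + 1)) :
      (p : ZMod (p ^ (k + 1))) ^ (k + 1) = 0)⟩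

theorem mulHomPowSucc_intCast (p k : ℕ) (z : ℤ) :
    mulHomPowSucc p k z = ((p * z : ℤ) : ZMod (p ^ (k + 1))) := by
  simp [mulHomPowSucc, ZMod.lift_coe, mul_comm]

theorem mulHomPowSucc_injective (p k : ℕ) [NeZero p] : Function.Injective (mulHomPowSucc p k) := by
  refine (ZMod.lift_injective _).mpr fun z hz ↦ ?_
  have hz' : ((p * z : ℤ) : ZMod (p ^ (k + 1))) = 0 := by simpa [mul_comm] using hz
  rw [ZMod.intCast_zmod_eq_zero_iff_dvd, pow_succ', Nat.cast_mul,
    mul_dvd_mul_iff_left (mod_cast NeZero.ne p)] at hz'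
  rwa [ZMod.intCast_zmod_eq_zero_iff_dvd]

/-- The zeros modulo `p ^ (k + 2)` which are divisible by `p` correspond to the vectors modulo
`p ^ (k + 1)` which are zeros modulo `p ^ k`. -/
theorem ncard_congruentZeros_zero [NeZero p] (k : ℕ) :
    (congruentZeros A ({0} : Set (ι → ZMod p)) (p ^ (k + 2))).ncard =
      p ^ Fintype.card ι *
        (congruentZeros A (Set.univ : Set (ι → ZMod 1)) (p ^ k)).ncard := by
  have hQ (z : ι → ℤ) : intForm A ℤ (fun i ↦ p * z i) = p * (p * intForm A ℤ z) :=
    (QuadraticMap.map_smul (intForm A ℤ) (p : ℤ) z).trans (mul_assoc _ _ _)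
  have hmem (z : ι → ℤ) : (fun i ↦ mulHomPowSucc p (k + 1) (z i)) ∈
      congruentZeros A ({0} : Set (ι → ZMod p)) (p ^ (k + 2)) ↔
      p * intForm A _ (fun i ↦ (z i : ZMod (p ^ (k + 1)))) = 0 := by
    have hzero : (fun i ↦ ((p * z i : ℤ) : ZMod p)) = 0 := by ext; simp
    simp only [mulHomPowSucc_intCast]
    rw [intCast_mem_congruentZeros A (dvd_pow_self p (by omega)), hzero, hQ, pow_succ',
      Nat.cast_mul, mul_dvd_mul_iff_left (mod_cast NeZero.ne p),
      ← ZMod.intCast_zmod_eq_zero_iff_dvd, Int.cast_mul, Int.cast_natCast, intCast_intForm]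
    exact and_iff_left rfl
  have himage : congruentZeros A ({0} : Set (ι → ZMod p)) (p ^ (k + 2)) =
      (fun (w : ι → ZMod (p ^ (k + 1))) i ↦ mulHomPowSucc p (k + 1) (w i)) ''
        {w | p * intForm A (ZMod (p ^ (k + 1))) w = 0} := by
    refine Set.Subset.antisymm (fun v hv ↦ ?_) (Set.image_subset_iff.mpr fun w hw ↦ ?_)
    · obtain ⟨y, rfl⟩ := exists_intCast_eq v
      have hy := ((intCast_mem_congruentZeros A (dvd_pow_self p (by omega))).mp hv).2
      choose z hz using fun i ↦ (ZMod.intCast_zmod_eq_zero_iff_dvd _ p).mp (congrFun hy i)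
      have hlift : (fun i ↦ (y i : ZMod (p ^ (k + 2)))) = fun i ↦ mulHomPowSucc p (k + 1) (z i) :=
        funext fun i ↦ by rw [mulHomPowSucc_intCast, hz i]
      rw [hlift] at hv ⊢
      exact ⟨_, (hmem z).mp hv, rfl⟩
    · obtain ⟨z, rfl⟩ := exists_intCast_eq w
      exact (hmem z).mpr hw
  rw [himage, Set.ncard_image_of_injective _
    fun v w h ↦ funext fun i ↦ mulHomPowSucc_injective p (k + 1) (congrFun h i)]
  simpa using ncard_sep_mul_intForm_eq_zero A (one_dvd (p ^ k)) Set.univ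

theorem ncard_congruentZeros_add_two [NeZero p] (k : ℕ) :
    (congruentZeros A (Set.univ : Set (ι → ZMod 1)) (p ^ (k + 2))).ncard =
      (congruentZeros A ({0}ᶜ : Set (ι → ZMod p)) (p ^ (k + 2))).ncard +
        p ^ Fintype.card ι *
          (congruentZeros A (Set.univ : Set (ι → ZMod 1)) (p ^ k)).ncard := by
  rw [← ncard_congruentZeros_zero, ← Set.ncard_union_eq _ (Set.toFinite _) (Set.toFinite _)]
  · congr 1
    ext v
    simp [congruentZeros, ← and_or_left, em']
  · exact Set.disjoint_left.mpr fun v h h' ↦ h.2 h'.2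

end CongruentZeros

section SecondMoment

theorem sum_card_fiber_sq {V C : Type*} [AddGroup V] [Fintype V] [Fintype C] [DecidableEq C]
    (f : V → C) : ∑ c, #{x | f x = c} ^ 2 = ∑ u : V, #{x | f (x + u) = f x} := by
  calc ∑ c, #{x | f x = c} ^ 2 = ∑ x, #{y | f y = f x} := by
        rw [← Finset.sum_fiberwise univ f]
        refine sum_congr rfl fun c _ ↦ ?_
        rw [sum_congr rfl fun x hx ↦ by rw [(mem_filter.mp hx).2], sum_const, smul_eq_mul, sq]
    _ = ∑ x, #{u | f (x + u) = f x} := by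
        refine sum_congr rfl fun x _ ↦ (card_equiv (Equiv.addLeft x) fun u ↦ ?_).symm
        simp
    _ = ∑ u, #{x | f (x + u) = f x} := by
        simp only [card_filter]
        exact sum_comm

theorem sq_card_fiber_sub_le {V C : Type*} [AddGroup V] [Fintype V] [Fintype C] [DecidableEq C]
    {f : V → C}
    (hf : ∀ u ≠ 0, (#{x | f (x + u) = f x} : ℝ) = Fintype.card V / Fintype.card C) (a : C) :
    ((#{x | f x = a} : ℝ) - Fintype.card V / Fintype.card C) ^ 2 ≤ Fintype.card V := by
  classical
  set v : ℝ := (Fintype.card V : ℝ)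
  set c : ℝ := (Fintype.card C : ℝ)
  have hc : c ≠ 0 := Nat.cast_ne_zero.mpr (Fintype.card_pos_iff.mpr ⟨a⟩).ne'
  have hsum : ∑ b, (#{x | f x = b} : ℝ) = v := by
    rw [← Nat.cast_sum, ← card_eq_sum_card_fiberwise fun x _ ↦ mem_univ (f x), card_univ]
  have hsq : ∑ b, (#{x | f x = b} : ℝ) ^ 2 = v + (v - 1) * (v / c) := by
    calc ∑ b, (#{x | f x = b} : ℝ) ^ 2 = ∑ u : V, (#{x | f (x + u) = f x} : ℝ) := mod_cast
          sum_card_fiber_sq f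
      _ = v + ∑ u ∈ univ.erase (0 : V), (#{x | f (x + u) = f x} : ℝ) := by
          rw [← add_sum_erase _ _ (mem_univ (0 : V))]
          simp [v]
      _ = v + (v - 1) * (v / c) := by
          rw [sum_congr rfl fun u hu ↦ hf u (ne_of_mem_erase hu), sum_const, nsmul_eq_mul,
            cast_card_erase_of_mem (mem_univ _), card_univ]
  calc ((#{x | f x = a} : ℝ) - v / c) ^ 2 ≤ ∑ b, ((#{x | f x = b} : ℝ) - v / c) ^ 2 :=
        single_le_sum (f := fun b ↦ ((#{x | f x = b} : ℝ) - v / c) ^ 2)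
          (fun b _ ↦ sq_nonneg _) (mem_univ a)
    _ = v - v / c := by
        simp only [sub_sq, sum_add_distrib, sum_sub_distrib, ← sum_mul, ← mul_sum, hsum, hsq,
          sum_const, card_univ, nsmul_eq_mul]
        field_simp
        ring
    _ ≤ v := sub_le_self _ (by positivity)

theorem sq_card_quadraticForm_fiber_sub_le {K V : Type*} [Field K] [Fintype K] [DecidableEq K]
    [AddCommGroup V] [Module K V] [Fintype V] {Q : QuadraticForm K V}
    (hQ : ∀ u ≠ 0, ∃ x, QuadraticMap.polar Q u x ≠ 0) (a : K) :
    ((#{x | Q x = a} : ℝ) - Fintype.card V / Fintype.card K) ^ 2 ≤ Fintype.card V := by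
  refine sq_card_fiber_sub_le (fun u hu ↦ ?_) a
  have hsurj : Function.Surjective (Q.polarBilin u) :=
    (Q.polarBilin u).surjective (by simpa [LinearMap.ext_iff] using hQ u hu)
  have h := card_mul_ncard_preimage (Q.polarBilin u).toAddMonoidHom hsurj {-Q u}
  have hset : (Q.polarBilin u).toAddMonoidHom ⁻¹' {-Q u} =
      ({x | Q (x + u) = Q x} : Finset V) := by
    ext x
    simp [eq_neg_iff_add_eq_zero, add_comm x u, QuadraticMap.map_add Q u x, add_right_comm _ (Q x),
      add_comm (QuadraticMap.polar Q u x)]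
  rw [hset, Set.ncard_coe_finset, Set.ncard_singleton, mul_one, Nat.card_eq_fintype_card,
    Nat.card_eq_fintype_card] at h
  rw [eq_div_iff (by simp), mul_comm]
  exact_mod_cast h

theorem sq_card_intForm_zeros_sub_le {ι : Type*} [Fintype ι] [DecidableEq ι] {A : Matrix ι ι ℤ}
    {p : ℕ} [Fact p.Prime] (hdet : ¬ (p : ℤ) ∣ (A + Aᵀ).det) :
    ((#{v | intForm A (ZMod p) v = 0} : ℝ) - p ^ Fintype.card ι / p) ^ 2 ≤ p ^ Fintype.card ι := by
  have hdet' : ((A + Aᵀ).map (Int.cast : ℤ → ZMod p)).det ≠ 0 := by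
    rw [← Int.cast_det]
    rwa [Ne, ZMod.intCast_zmod_eq_zero_iff_dvd]
  have hQ (u : ι → ZMod p) (hu : u ≠ 0) :
      ∃ x, QuadraticMap.polar (intForm A (ZMod p)) u x ≠ 0 := by
    have hNu := mt (Matrix.eq_zero_of_mulVec_eq_zero hdet') hu
    simp only [polar_intForm]
    simpa using mt (dotProduct_eq_zero _) hNu
  simpa using sq_card_quadraticForm_fiber_sub_le hQ 0

end SecondMoment

section ZeroDensity

variable {ι : Type*} [Fintype ι] [DecidableEq ι] (A : Matrix ι ι ℤ) {p : ℕ}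

/-- The density of the zeros modulo `p ^ k` of the form given by `A` that reduce modulo `q` to an
element of `X`. Its limit as `k → ∞` is the `p`-adic density of the zeros lying in `X`. -/
def zeroDensity {q : ℕ} (X : Set (ι → ZMod q)) (p k : ℕ) : ℝ :=
  (p : ℝ) ^ k * (congruentZeros A X (p ^ k)).ncard / ((p : ℝ) ^ k) ^ Fintype.card ι

theorem zeroDensity_succ (hp : p.Prime) {k d q : ℕ} (hk : 2 * d + 1 ≤ k)
    (hq : q ∣ p ^ (k - d)) {X : Set (ι → ZMod q)}
    (hreg : ∀ z : ι → ℤ, (fun i ↦ (z i : ZMod q)) ∈ X →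
      ∃ i, ¬ (p : ℤ) ^ (d + 1) ∣ ((A + Aᵀ) *ᵥ z) i) :
    zeroDensity A X p (k + 1) = zeroDensity A X p k := by
  have h : (p * (congruentZeros A X (p ^ (k + 1))).ncard : ℝ) =
      p ^ Fintype.card ι * (congruentZeros A X (p ^ k)).ncard :=
    mod_cast mul_ncard_congruentZeros_succ A hp hk hq hreg
  have hp0 : (p : ℝ) ≠ 0 := mod_cast hp.ne_zero
  rw [zeroDensity, zeroDensity, pow_succ, mul_assoc, h, mul_pow]
  field_simp

theorem zeroDensity_eq_of_le (hp : p.Prime) {k₀ k d q : ℕ} (hk₀ : 2 * d + 1 ≤ k₀)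
    (hq : q ∣ p ^ (k₀ - d)) {X : Set (ι → ZMod q)}
    (hreg : ∀ z : ι → ℤ, (fun i ↦ (z i : ZMod q)) ∈ X →
      ∃ i, ¬ (p : ℤ) ^ (d + 1) ∣ ((A + Aᵀ) *ᵥ z) i) (hk : k₀ ≤ k) :
    zeroDensity A X p k = zeroDensity A X p k₀ := by
  induction k, hk using Nat.le_induction with
  | base => rfl
  | succ k hk ih =>
    rw [← ih]
    exact zeroDensity_succ A hp (hk₀.trans hk)
      (hq.trans (pow_dvd_pow p (Nat.sub_le_sub_right hk d))) hreg

theorem zeroDensity_add_two [NeZero p] (k : ℕ) :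
    zeroDensity A (Set.univ : Set (ι → ZMod 1)) p (k + 2) =
      zeroDensity A ({0}ᶜ : Set (ι → ZMod p)) p (k + 2) +
        (p : ℝ) ^ 2 / p ^ Fintype.card ι *
          zeroDensity A (Set.univ : Set (ι → ZMod 1)) p k := by
  have hp0 : (p : ℝ) ≠ 0 := NeZero.ne _
  simp only [zeroDensity, ncard_congruentZeros_add_two, Nat.cast_add, Nat.cast_mul, Nat.cast_pow]
  rw [mul_add, add_div, add_right_inj, pow_add, mul_pow]
  field_simp
  ring

theorem exists_not_dvd_mulVec_of_intCast_mem_compl_zero (hp : p.Prime) {d : ℕ}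
    (hd : ¬ (p : ℤ) ^ (d + 1) ∣ (A + Aᵀ).det) (z : ι → ℤ)
    (hz : (fun i ↦ (z i : ZMod p)) ∈ ({0}ᶜ : Set (ι → ZMod p))) :
    ∃ i, ¬ (p : ℤ) ^ (d + 1) ∣ ((A + Aᵀ) *ᵥ z) i := by
  obtain ⟨i, hi⟩ := Function.ne_iff.mp hz
  exact exists_not_dvd_mulVec hp hd (mt (ZMod.intCast_zmod_eq_zero_iff_dvd _ _).mpr hi)

theorem zeroDensity_compl_zero_eq_of_le (hp : p.Prime) {d : ℕ}
    (hd : ¬ (p : ℤ) ^ (d + 1) ∣ (A + Aᵀ).det) {k : ℕ} (hk : 2 * d + 1 ≤ k) :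
    zeroDensity A ({0}ᶜ : Set (ι → ZMod p)) p k =
      zeroDensity A ({0}ᶜ : Set (ι → ZMod p)) p (2 * d + 1) :=
  zeroDensity_eq_of_le A hp le_rfl (dvd_pow_self p (by omega))
    (exists_not_dvd_mulVec_of_intCast_mem_compl_zero A hp hd) hk

theorem zeroDensity_pos [NeZero p] {q k : ℕ} {X : Set (ι → ZMod q)}
    (h : (congruentZeros A X (p ^ k)).Nonempty) : 0 < zeroDensity A X p k := by
  have hcard := (Set.ncard_pos (Set.toFinite _)).mpr h
  have hp0 : (0 : ℝ) < p := mod_cast NeZero.pos p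
  rw [zeroDensity]
  positivity

theorem zeroDensity_compl_zero_pos (hp : p.Prime) (hcard : 5 ≤ Fintype.card ι)
    (hdet : (A + Aᵀ).det ≠ 0) {k : ℕ} (hk : k ≠ 0) :
    0 < zeroDensity A ({0}ᶜ : Set (ι → ZMod p)) p k := by
  have : NeZero p := ⟨hp.ne_zero⟩
  obtain ⟨v, hv, hdvd⟩ := exists_primitive_pow_dvd (Pi.basisFun ℤ ι) hcard (intForm A ℤ)
    (by rwa [polarDiscr_intForm]) hp k
  refine zeroDensity_pos A ⟨fun i ↦ v i, (intCast_mem_congruentZeros A (dvd_pow_self p hk)).mpr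
    ⟨mod_cast hdvd, fun h ↦ ?_⟩⟩
  choose u hu using fun i ↦ (ZMod.intCast_zmod_eq_zero_iff_dvd _ p).mp (congrFun h i)
  exact hv u (funext hu)

theorem zeroDensity_singleton (hp : p.Prime) (hdet : ¬ (p : ℤ) ∣ (A + Aᵀ).det) {e : ℕ} (he : e ≠ 0)
    {z : ι → ℤ} (hz : ∃ i, ¬ (p : ℤ) ∣ z i) (hdvd : (p : ℤ) ^ e ∣ intForm A ℤ z) {k : ℕ}
    (hk : e ≤ k) :
    zeroDensity A {fun i ↦ (z i : ZMod (p ^ e))} p k =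
      (p : ℝ) ^ e / ((p : ℝ) ^ e) ^ Fintype.card ι := by
  have hreg (y : ι → ℤ) (hy : (fun i ↦ (y i : ZMod (p ^ e))) ∈
      ({fun i ↦ (z i : ZMod (p ^ e))} : Set (ι → ZMod (p ^ e)))) :
      ∃ i, ¬ (p : ℤ) ^ (0 + 1) ∣ ((A + Aᵀ) *ᵥ y) i := by
    obtain ⟨i, hi⟩ := hz
    refine exists_not_dvd_mulVec hp (by simpa using hdet) (i := i) ?_
    have hyz : ((p ^ e : ℕ) : ℤ) ∣ z i - y i :=
      (ZMod.intCast_eq_intCast_iff_dvd_sub _ _ _).mp (congrFun hy i)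
    rw [Nat.cast_pow] at hyz
    rwa [← dvd_iff_dvd_of_dvd_sub ((dvd_pow_self _ he).trans hyz)]
  rw [zeroDensity_eq_of_le A (q := p ^ e) (d := 0) hp (by omega) dvd_rfl hreg hk, zeroDensity]
  have hzeros : congruentZeros A {fun i ↦ (z i : ZMod (p ^ e))} (p ^ e) =
      {fun i ↦ (z i : ZMod (p ^ e))} := by
    refine Set.Subset.antisymm (fun v hv ↦ ?_) ?_
    · simpa using hv.2
    · exact Set.singleton_subset_iff.mpr <|
        (intCast_mem_congruentZeros A dvd_rfl).mpr ⟨mod_cast hdvd, rfl⟩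
  rw [hzeros, Set.ncard_singleton, Nat.cast_one, mul_one]

end ZeroDensity

theorem tendsto_of_add_eq_add_mul {x : ℕ → ℝ} {c ρ : ℝ} {r : ℕ} (hr : r ≠ 0) (hρ₀ : 0 ≤ ρ)
    (hρ₁ : ρ < 1) (hx : ∀ k, x (k + r) = c + ρ * x k) :
    Tendsto x atTop (𝓝 (c / (1 - ρ))) := by
  set l := c / (1 - ρ)
  have hl : c + ρ * l = l := by
    have : 1 - ρ ≠ 0 := (sub_pos.mpr hρ₁).ne'
    simp only [l]
    field_simp
    ring
  have hgeom (s q : ℕ) : x (s + r * q) - l = ρ ^ q * (x s - l) := by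
    induction q with
    | zero => simp
    | succ q ih =>
      rw [mul_add_one, ← add_assoc, hx, pow_succ]
      linear_combination ρ * ih + hl
  have hsub : (fun k ↦ ρ ^ (k / r) * (x (k % r) - l)) = fun k ↦ x k - l := by
    ext k
    rw [← hgeom, Nat.mod_add_div]
  have hbdd : IsBoundedUnder (· ≤ ·) atTop (Norm.norm ∘ fun k ↦ x (k % r) - l) := by
    refine isBoundedUnder_of ⟨∑ s ∈ range r, ‖x s - l‖, fun k ↦ ?_⟩
    exact single_le_sum (f := fun s ↦ ‖x s - l‖) (fun s _ ↦ norm_nonneg _)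
      (mem_range.mpr (Nat.mod_lt k (Nat.pos_of_ne_zero hr)))
  rw [← tendsto_sub_nhds_zero_iff, ← hsub]
  exact ((tendsto_pow_atTop_nhds_zero_of_lt_one hρ₀ hρ₁).comp
    (Nat.tendsto_div_const_atTop hr)).zero_mul_isBoundedUnder_le hbdd

section LocalDensity

variable {ι : Type*} [Fintype ι] [DecidableEq ι] (A : Matrix ι ι ℤ) {p : ℕ}

/-- The `p`-adic density of the zeros of the form given by `A`: the density of the primitive zeros,
which is already attained modulo `p ^ (2 * d + 1)` when `p ^ d` is the power of `p` in the
discriminant, summed over the dilates by the powers of `p` as a geometric series. -/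
def localDensity (p : ℕ) : ℝ :=
  zeroDensity A ({0}ᶜ : Set (ι → ZMod p)) p (2 * padicValInt p (A + Aᵀ).det + 1) /
    (1 - (p : ℝ) ^ 2 / p ^ Fintype.card ι)

variable {A}

theorem sq_div_pow_le_inv_pow_three {x : ℝ} (hx : 1 ≤ x) {m : ℕ} (hm : 5 ≤ m) :
    x ^ 2 / x ^ m ≤ (x ^ 3)⁻¹ := by
  rw [inv_eq_one_div, div_le_div_iff₀ (by positivity) (by positivity), ← pow_add, one_mul]
  exact pow_le_pow_right₀ hx hm

theorem inv_pow_three_le {x : ℝ} (hx : 2 ≤ x) : (x ^ 3)⁻¹ ≤ 1 / 8 := by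
  rw [inv_eq_one_div]
  gcongr
  calc (8 : ℝ) = 2 ^ 3 := by norm_num
    _ ≤ x ^ 3 := by gcongr

theorem sq_div_pow_lt_one {x : ℝ} (hx : 1 < x) {m : ℕ} (hm : 3 ≤ m) : x ^ 2 / x ^ m < 1 :=
  (div_lt_one (by positivity)).mpr (pow_lt_pow_right₀ hx hm)

theorem localDensity_pos (hp : p.Prime) (hcard : 5 ≤ Fintype.card ι) (hdet : (A + Aᵀ).det ≠ 0) :
    0 < localDensity A p :=
  div_pos (zeroDensity_compl_zero_pos A hp hcard hdet (by omega))
    (sub_pos.mpr (sq_div_pow_lt_one (mod_cast hp.one_lt) (by omega)))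

theorem tendsto_zeroDensity_univ (hp : p.Prime) (hcard : 3 ≤ Fintype.card ι)
    (hdet : (A + Aᵀ).det ≠ 0) :
    Tendsto (zeroDensity A (Set.univ : Set (ι → ZMod 1)) p) atTop (𝓝 (localDensity A p)) := by
  have : Fact p.Prime := ⟨hp⟩
  set d := padicValInt p (A + Aᵀ).det
  have hd : ¬ (p : ℤ) ^ (d + 1) ∣ (A + Aᵀ).det := by
    simp [padicValInt_dvd_iff, hdet, d]
  rw [← tendsto_add_atTop_iff_nat (2 * d + 1)]
  refine tendsto_of_add_eq_add_mul two_ne_zero (by positivity)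
    (sq_div_pow_lt_one (mod_cast hp.one_lt) hcard) fun k ↦ ?_
  rw [add_right_comm, zeroDensity_add_two A,
    zeroDensity_compl_zero_eq_of_le A hp hd (by omega : 2 * d + 1 ≤ k + (2 * d + 1) + 2)]

theorem zeroDensity_compl_zero_one [Fact p.Prime] :
    zeroDensity A ({0}ᶜ : Set (ι → ZMod p)) p 1 =
      p * (#{v | intForm A (ZMod p) v = 0} - 1) / p ^ Fintype.card ι := by
  have hset : congruentZeros A ({0}ᶜ : Set (ι → ZMod p)) p =
      ({v | intForm A (ZMod p) v = 0} : Finset (ι → ZMod p)).erase 0 := by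
    ext v
    simp [congruentZeros, and_comm]
  rw [zeroDensity, pow_one, pow_one, hset, Set.ncard_coe_finset, cast_card_erase_of_mem (by simp)]

theorem rpow_neg_three_halves_sq {x : ℝ} (hx : 0 ≤ x) :
    (x ^ (-(3 / 2) : ℝ)) ^ 2 = (x ^ 3)⁻¹ := by
  rw [← Real.rpow_natCast, ← Real.rpow_mul hx, ← Real.rpow_natCast, ← Real.rpow_neg hx]
  norm_num

theorem abs_card_intForm_zeros_sub_one_le [Fact p.Prime] (hcard : 5 ≤ Fintype.card ι)
    (hdet : ¬ (p : ℤ) ∣ (A + Aᵀ).det) :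
    |(p : ℝ) * #{v | intForm A (ZMod p) v = 0} / p ^ Fintype.card ι - 1| ≤
      (p : ℝ) ^ (-(3 / 2) : ℝ) := by
  have hp1 : (1 : ℝ) ≤ p := mod_cast NeZero.one_le
  have hp0 : (0 : ℝ) < p := by linarith
  set P : ℝ := (p : ℝ) ^ Fintype.card ι
  have hP : 0 < P := by positivity
  refine abs_le_of_sq_le_sq ?_ (Real.rpow_pos_of_pos hp0 _).le
  rw [rpow_neg_three_halves_sq hp0.le]
  calc ((p : ℝ) * #{v | intForm A (ZMod p) v = 0} / P - 1) ^ 2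
      = (p / P) ^ 2 * ((#{v | intForm A (ZMod p) v = 0} : ℝ) - P / p) ^ 2 := by
        field_simp
    _ ≤ (p / P) ^ 2 * P := by
        gcongr
        exact sq_card_intForm_zeros_sub_le hdet
    _ = (p : ℝ) ^ 2 / P := by
        field_simp
    _ ≤ ((p : ℝ) ^ 3)⁻¹ := sq_div_pow_le_inv_pow_three hp1 hcard

theorem abs_localDensity_sub_one_le (hp : p.Prime) (hcard : 5 ≤ Fintype.card ι)
    (hdet : ¬ (p : ℤ) ∣ (A + Aᵀ).det) :
    |localDensity A p - 1| ≤ 4 * (p : ℝ) ^ (-(3 / 2) : ℝ) := by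
  have : Fact p.Prime := ⟨hp⟩
  have hp1 : (1 : ℝ) ≤ p := mod_cast hp.one_le
  set P : ℝ := (p : ℝ) ^ Fintype.card ι
  have hP : 0 < P := by positivity
  set s : ℝ := (p : ℝ) ^ (-(3 / 2) : ℝ)
  set ρ : ℝ := (p : ℝ) ^ 2 / P
  set Z : ℝ := (#{v | intForm A (ZMod p) v = 0} : ℝ)
  have hs : 0 < s := Real.rpow_pos_of_pos (by linarith) _
  have hρ : ρ ≤ s ^ 2 :=
    (rpow_neg_three_halves_sq (by linarith : (0 : ℝ) ≤ p)) ▸ sq_div_pow_le_inv_pow_three hp1 hcard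
  have hρ8 : ρ ≤ 1 / 8 :=
    (sq_div_pow_le_inv_pow_three hp1 hcard).trans (inv_pow_three_le (mod_cast hp.two_le))
  have hρs : ρ ≤ s := by nlinarith
  have hZ : |p * Z / P - 1| ≤ s := abs_card_intForm_zeros_sub_one_le hcard hdet
  have hlin : p / P ≤ ρ := div_le_div_of_nonneg_right (by nlinarith) hP.le
  have hdensity : localDensity A p - 1 = (p * Z / P - 1 + (ρ - p / P)) / (1 - ρ) := by
    have hne : 1 - ρ ≠ 0 := by linarith
    have hnum : p * (Z - 1) / P = p * Z / P - p / P := by ring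
    rw [localDensity, padicValInt.eq_zero_of_not_dvd hdet, zeroDensity_compl_zero_one, hnum,
      eq_div_iff hne, sub_mul, div_mul_cancel₀ _ hne]
    ring
  have hnum : |p * Z / P - 1 + (ρ - p / P)| ≤ 2 * s := by
    have : 0 ≤ p / P := by positivity
    rw [abs_le] at hZ ⊢
    constructor <;> linarith
  rw [hdensity, abs_div, abs_of_pos (by linarith : 0 < 1 - ρ), div_le_iff₀ (by linarith)]
  nlinarith

end LocalDensity

section Product

theorem exists_forall_hasProd_mulIndicator {α : Type*} {f : α → ℝ} (hf : ∀ a, 0 < f a)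
    (hsum : Summable fun a ↦ f a - 1) :
    ∃ T, 0 ≤ T ∧ ∀ s : Set α, ∃ P, HasProd (s.mulIndicator f) P ∧
      Real.exp (-T) ≤ P ∧ P ≤ Real.exp T := by
  have hlog : Summable fun a ↦ Real.log (f a) := by
    simpa using Real.summable_log_one_add_of_summable hsum
  refine ⟨∑' a, |Real.log (f a)|, tsum_nonneg fun _ ↦ abs_nonneg _, fun s ↦ ?_⟩
  have hpos (a : α) : 0 < s.mulIndicator f a := by
    by_cases ha : a ∈ s <;> simp [ha, hf]
  have hsum_ind : HasSum (fun a ↦ Real.log (s.mulIndicator f a))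
      (∑' a, s.indicator (fun a ↦ Real.log (f a)) a) := by
    convert! (hlog.indicator s).hasSum with a
    by_cases ha : a ∈ s <;> simp [ha]
  have hle : |∑' a, s.indicator (fun a ↦ Real.log (f a)) a| ≤ ∑' a, |Real.log (f a)| := by
    refine (norm_tsum_le_tsum_norm (hlog.indicator s).norm).trans ?_
    exact (hlog.indicator s).norm.tsum_le_tsum (fun a ↦ norm_indicator_le_norm_self _ a) hlog.norm
  exact ⟨_, Real.hasProd_of_hasSum_log hpos hsum_ind, Real.exp_le_exp.mpr (abs_le.mp hle).1,
    Real.exp_le_exp.mpr (abs_le.mp hle).2⟩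

theorem hasProd_map_pow_padicValNat {R : Type*} [CommMonoid R] [TopologicalSpace R] (φ : ℕ →* R)
    {L : ℕ} (hL : L ≠ 0) :
    HasProd (fun p : {p : ℕ // p.Prime} ↦ φ (p ^ padicValNat p L)) (φ L) := by
  have h : ∏ p ∈ (range (L + 1)).subtype Nat.Prime, φ ((p : ℕ) ^ padicValNat p L) = φ L := by
    rw [prod_subtype_eq_prod_filter (fun p : ℕ ↦ φ (p ^ padicValNat p L)), ← map_prod,
      Nat.prod_pow_prime_padicValNat L hL (L + 1) L.lt_succ_self]
  rw [← h]
  refine hasProd_prod_of_ne_finset_one fun p hp ↦ ?_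
  have : ¬ (p : ℕ) ∣ L := fun hdvd ↦ hp <| mem_subtype.mpr <|
    mem_range_succ_iff.mpr (Nat.le_of_dvd (Nat.pos_of_ne_zero hL) hdvd)
  rw [padicValNat.eq_zero_of_not_dvd this, pow_zero, map_one]

end Product

section SingularSeries

theorem exists_add_transpose_eq {ι : Type*} [LinearOrder ι] {N : Matrix ι ι ℤ} (hN : N.IsSymm)
    (heven : ∀ i, Even (N i i)) : ∃ A : Matrix ι ι ℤ, A + Aᵀ = N := by
  choose a ha using heven
  refine ⟨Matrix.of fun i j ↦ if i < j then N i j else if i = j then a i else 0, ?_⟩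
  ext i j
  rcases lt_trichotomy i j with h | rfl | h
  · simp [h, h.not_gt, h.ne']
  · simp [ha]
  · simp [h, h.not_gt, h.ne', hN.apply i j]

theorem Fint_add_transpose {m : ℕ} (A : Matrix (Fin m) (Fin m) ℤ) (x : Fin m → ℤ) :
    Fint (A + Aᵀ) x = intForm A ℤ x := by
  have hself : ((A + Aᵀ).map Int.cast *ᵥ x) ⬝ᵥ x = 2 * intForm A ℤ x := by
    rw [← polar_intForm, QuadraticMap.polar_self, nsmul_eq_mul, Nat.cast_ofNat]
  have h : ∑ i, ∑ j, (A + Aᵀ) i j * x i * x j = 2 * intForm A ℤ x := by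
    simp only [← hself, dotProduct, Matrix.mulVec, sum_mul, Matrix.map_apply, Int.cast_id,
      mul_right_comm]
  rw [Fint, h, Int.mul_ediv_cancel_left _ two_ne_zero]

variable {n : ℕ} {A : Matrix (Fin (n + 1)) (Fin (n + 1)) ℤ} {L p : ℕ} {lam : Fin (n + 1) → ℤ}

theorem finEquiv_apply (r : ℕ) [NeZero r] (x : Fin r) :
    ZMod.finEquiv r x = ((x : ℤ) : ZMod r) := by
  obtain ⟨r, rfl⟩ := Nat.exists_eq_succ_of_ne_zero (NeZero.ne r)
  exact ((Int.cast_natCast _).trans (Fin.cast_val_eq_self x)).symm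

theorem not_natCast_dvd_of_gcd_eq_one {a : ℤ} (hp : p.Prime) (hpL : p ∣ L)
    (h : Int.gcd (L : ℤ) a = 1) : ¬ (p : ℤ) ∣ a := fun ha ↦
  hp.not_dvd_one <| Int.natCast_dvd_natCast.mp <|
    h ▸ Int.dvd_coe_gcd (Int.natCast_dvd_natCast.mpr hpL) ha

theorem localCount_eq_ncard [NeZero p] {k : ℕ} (hk : padicValNat p L ≤ k) :
    localCount n (A + Aᵀ) L lam p k =
      (congruentZeros A {fun i ↦ (lam i : ZMod (p ^ padicValNat p L))} (p ^ k)).ncard := by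
  refine Nat.card_congr <|
    (Equiv.piCongrRight fun _ ↦ (ZMod.finEquiv (p ^ k)).toEquiv).subtypeEquiv fun v ↦ ?_
  have hv : (Equiv.piCongrRight fun _ ↦ (ZMod.finEquiv (p ^ k)).toEquiv) v =
      fun i ↦ ((v i : ℤ) : ZMod (p ^ k)) :=
    funext fun i ↦ finEquiv_apply _ _
  rw [hv, intCast_mem_congruentZeros A (pow_dvd_pow p hk), Fint_add_transpose, Nat.cast_pow,
    Set.mem_singleton_iff, eq_comm, funext_iff]
  simp only [ZMod.intCast_eq_intCast_iff_dvd_sub, Nat.cast_pow]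

theorem localCount_div_eq_zeroDensity [NeZero p] {k : ℕ} (hk : padicValNat p L ≤ k) :
    (localCount n (A + Aᵀ) L lam p k : ℝ) / (p : ℝ) ^ (n * k) =
      zeroDensity A {fun i ↦ (lam i : ZMod (p ^ padicValNat p L))} p k := by
  have hp0 : (p : ℝ) ≠ 0 := NeZero.ne _
  rw [zeroDensity, localCount_eq_ncard hk, Fintype.card_fin, pow_succ, ← pow_mul, mul_comm n k]
  field_simp

/-- The value of `σ_p(W;L,λ)`: the `p`-adic density of all the zeros if `p ∤ L`, and the density
`p ^ (-e n)` of a single residue class of nonsingular zeros modulo `p ^ e` otherwise, where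
`e = ord_p L`. -/
def singularFactor (A : Matrix (Fin (n + 1)) (Fin (n + 1)) ℤ) (L p : ℕ) : ℝ :=
  (((p ^ padicValNat p L : ℕ) : ℝ) ^ n)⁻¹ * {q : ℕ | ¬ q ∣ L}.mulIndicator (localDensity A) p

theorem tendsto_localCount_div_of_not_dvd (hn : 2 ≤ n) (hdet : (A + Aᵀ).det ≠ 0) (hp : p.Prime)
    (hpL : ¬ p ∣ L) :
    Tendsto (fun k ↦ (localCount n (A + Aᵀ) L lam p k : ℝ) / (p : ℝ) ^ (n * k)) atTop
      (𝓝 (singularFactor A L p)) := by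
  have : NeZero p := ⟨hp.ne_zero⟩
  have hv : padicValNat p L = 0 := padicValNat.eq_zero_of_not_dvd hpL
  have huniv : ({fun i ↦ (lam i : ZMod 1)} : Set (Fin (n + 1) → ZMod 1)) = Set.univ :=
    Set.eq_univ_of_forall fun _ ↦ Subsingleton.elim _ _
  have hlim := tendsto_zeroDensity_univ hp (by simpa using hn) hdet
  refine Tendsto.congr (fun k ↦ ?_) ?_
    (f₁ := zeroDensity A (Set.univ : Set (Fin (n + 1) → ZMod 1)) p)
  · rw [localCount_div_eq_zeroDensity (by omega), hv, pow_zero, huniv]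
  · simpa [singularFactor, hv, hpL] using hlim

theorem tendsto_localCount_div_of_dvd (hL : L ≠ 0) (hp : p.Prime) (hpL : p ∣ L)
    (hdet : ¬ (p : ℤ) ∣ (A + Aᵀ).det) (hF : (L : ℤ) ∣ Fint (A + Aᵀ) lam)
    (hlam : ∃ i, ¬ (p : ℤ) ∣ lam i) :
    Tendsto (fun k ↦ (localCount n (A + Aᵀ) L lam p k : ℝ) / (p : ℝ) ^ (n * k)) atTop
      (𝓝 (singularFactor A L p)) := by
  have : Fact p.Prime := ⟨hp⟩
  have he : padicValNat p L ≠ 0 := Nat.one_le_iff_ne_zero.mp (one_le_padicValNat_of_dvd hL hpL)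
  have hpow : (p : ℤ) ^ padicValNat p L ∣ L := mod_cast pow_padicValNat_dvd
  have hdvd : (p : ℤ) ^ padicValNat p L ∣ intForm A ℤ lam :=
    Fint_add_transpose A lam ▸ hpow.trans hF
  refine tendsto_const_nhds.congr' ?_
  filter_upwards [eventually_ge_atTop (padicValNat p L)] with k hk
  have hp0 : (p : ℝ) ≠ 0 := NeZero.ne _
  rw [localCount_div_eq_zeroDensity hk, zeroDensity_singleton A hp hdet he hlam hdvd hk]
  simp only [singularFactor, Set.mulIndicator, Set.mem_ofPred_eq, hpL, not_true_eq_false, if_false,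
    Fintype.card_fin, pow_succ, Nat.cast_pow, mul_one]
  field_simp

theorem hasProd_inv_pow_padicValNat (n : ℕ) (hL : L ≠ 0) :
    HasProd (fun p : {p : ℕ // p.Prime} ↦ (((p ^ padicValNat p L : ℕ) : ℝ) ^ n)⁻¹)
      ((L : ℝ) ^ n)⁻¹ :=
  hasProd_map_pow_padicValNat
    { toFun := fun x ↦ ((x : ℝ) ^ n)⁻¹
      map_one' := by simp
      map_mul' := fun x y ↦ by rw [Nat.cast_mul, mul_pow, mul_inv] } hL

theorem summable_localDensity_sub_one {ι : Type*} [Fintype ι] [DecidableEq ι] {A : Matrix ι ι ℤ}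
    (hcard : 5 ≤ Fintype.card ι) (hdet : (A + Aᵀ).det ≠ 0) :
    Summable fun p : {p : ℕ // p.Prime} ↦ localDensity A p - 1 := by
  have hsum : Summable fun p : {p : ℕ // p.Prime} ↦ 4 * (p : ℝ) ^ (-(3 / 2) : ℝ) :=
    ((Real.summable_nat_rpow.mpr (by norm_num)).comp_injective Subtype.val_injective).mul_left 4
  have hfin : {p : {p : ℕ // p.Prime} | ((p : ℕ) : ℤ) ∣ (A + Aᵀ).det}.Finite := by
    refine ((A + Aᵀ).det.natAbs.divisors.finite_toSet.preimage
      Subtype.val_injective.injOn).subset fun p hp ↦ ?_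
    simpa [hdet] using Int.natCast_dvd.mp hp
  refine hsum.of_norm_bounded_eventually ?_
  filter_upwards [hfin.compl_mem_cofinite] with p hp
  exact abs_localDensity_sub_one_le p.2 hcard hp

theorem singular_series_growth_general (n : ℕ) (hn : 4 ≤ n)
    (N : Matrix (Fin (n + 1)) (Fin (n + 1)) ℤ) (hNsym : N.IsSymm)
    (hNeven : ∀ i, Even (N i i)) (hNdet : N.det ≠ 0) :
    ∃ c₁ c₂ : ℝ, 0 < c₁ ∧ c₁ ≤ c₂ ∧
      ∀ (L : ℕ), 0 < L → Int.gcd (L : ℤ) N.det = 1 →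
      ∀ lam : Fin (n + 1) → ℤ, (L : ℤ) ∣ Fint N lam →
        Int.gcd (Finset.univ.gcd lam) (L : ℤ) = 1 →
        ∃ σp : ℕ → ℝ,
          (∀ p : ℕ, p.Prime →
            Tendsto
              (fun k : ℕ ↦ (localCount n N L lam p k : ℝ) / (p : ℝ) ^ (n * k))
              atTop (𝓝 (σp p))) ∧
          ∃ S : ℝ, HasProd (fun p : {p : ℕ // p.Prime} ↦ σp p.1) S ∧
            c₁ * ((L : ℝ) ^ n)⁻¹ ≤ S ∧ S ≤ c₂ * ((L : ℝ) ^ n)⁻¹ := by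
  obtain ⟨A, rfl⟩ := exists_add_transpose_eq hNsym hNeven
  have hcard : 5 ≤ Fintype.card (Fin (n + 1)) := by simpa using hn
  obtain ⟨T, hT, hprod⟩ := exists_forall_hasProd_mulIndicator
    (fun p : {p : ℕ // p.Prime} ↦ localDensity_pos p.2 hcard hNdet)
    (summable_localDensity_sub_one hcard hNdet)
  refine ⟨Real.exp (-T), Real.exp T, Real.exp_pos _, Real.exp_le_exp.mpr (by linarith),
    fun L hL hgcd lam hF hlam ↦ ⟨singularFactor A L, fun p hp ↦ ?_, ?_⟩⟩
  · by_cases hpL : p ∣ L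
    · exact tendsto_localCount_div_of_dvd hL.ne' hp hpL
        (not_natCast_dvd_of_gcd_eq_one hp hpL hgcd) hF
        (not_forall.mp fun h ↦ not_natCast_dvd_of_gcd_eq_one hp hpL (Int.gcd_comm _ _ ▸ hlam)
          (Finset.dvd_gcd fun i _ ↦ h i))
    · exact tendsto_localCount_div_of_not_dvd (by omega) hNdet hp hpL
  · obtain ⟨P, hP, hle, hge⟩ := hprod {p | ¬ (p : ℕ) ∣ L}
    refine ⟨((L : ℝ) ^ n)⁻¹ * P, (hasProd_inv_pow_padicValNat n hL.ne').mul hP, ?_, ?_⟩ <;>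
      rw [mul_comm] <;> gcongr

end SingularSeries

/-- Proposition 6.3 (growth of the singular series): `𝔖(W;L,λ) ≍ L⁻ⁿ`,
uniformly in `L` and `λ`. -/
theorem singular_series_growth (n : ℕ) (hn : 4 ≤ n)
    (N : Matrix (Fin (n+1)) (Fin (n+1)) ℤ) (hNsym : N.IsSymm)
    (hNeven : ∀ i, Even (N i i)) (hNdet : N.det ≠ 0) :
    ∃ c₁ c₂ : ℝ, 0 < c₁ ∧ c₁ ≤ c₂ ∧
      ∀ (L : ℕ), 0 < L → Int.gcd (L : ℤ) (2 * N.det) = 1 →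
      ∀ lam : Fin (n+1) → ℤ, (L : ℤ) ∣ Fint N lam →
        Int.gcd (Finset.univ.gcd lam) (L : ℤ) = 1 →
        ∃ σp : ℕ → ℝ,
          (∀ p : ℕ, p.Prime →
            Filter.Tendsto
              (fun k : ℕ => (localCount n N L lam p k : ℝ) / (p : ℝ)^(n*k))
              Filter.atTop (nhds (σp p))) ∧
          ∃ S : ℝ, HasProd (fun p : {p : ℕ // p.Prime} => σp p.1) S ∧
            c₁ * ((L : ℝ)^n)⁻¹ ≤ S ∧ S ≤ c₂ * ((L : ℝ)^n)⁻¹ := by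
  obtain ⟨c₁, c₂, hc₁, hc, h⟩ := singular_series_growth_general n hn N hNsym hNeven hNdet
  exact ⟨c₁, c₂, hc₁, hc, fun L hL hgcd ↦ h L hL (Nat.Coprime.coprime_dvd_right
    (Int.natAbs_dvd_natAbs.mpr (dvd_mul_left N.det 2)) hgcd)⟩

end Quad
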